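/- Let G be the free group on generators a_1,…,a_n and let H be a free group of rank greater than 1. Then the set of triples (φ, u, v) ∈ H^n × H × H (where φ is identified with the homomorphism G → H sending a_i to its i-th coordinate) such that u·v⁻¹ does not lie in the image subgroup φ(G) is generic: its asymptotic density in H^{n+2} equals 1. -/

import Mathlib

/-- The number of elements of the free group of rank `n` of word length at most `p`,
i.e. `|H_p|`. -/
noncomputable def ballCount (n p : ℕ) : ℕ :=
  Nat.card {w : FreeGroup (Fin n) // FreeGroup.norm w ≤ p}

/-! Fix `d` of order `p / 4`. Outside an exponentially small proportion of tuples `φ` in the ball of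
radius `p`, the entries `φ i` have length at least `3 * d` and any two distinct elements among the
`φ i` and their inverses share an initial segment shorter than `d`: sharing `d` letters would allow
one of the entries to be recovered from an element of the ball of radius `p - d`, which is smaller
by a factor of at least `2 ^ d`. For such `φ` cancellation in the image of a word `w` is too weak to
make the image shorter than `d * |w|`, so `u * v⁻¹ = φ w`, which has length at most `2 * p`, forces
`|w| ≤ 15`. Hence `φ` and `v` leave boundedly many possibilities for `u`. -/

section CommonPrefix

/-- The length of the longest common prefix of two lists. -/
def commonPrefixLength {β : Type*} [DecidableEq β] : List β → List β → ℕ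
  | a :: s, b :: t => if a = b then commonPrefixLength s t + 1 else 0
  | _, _ => 0

lemma le_commonPrefixLength_iff {β : Type*} [DecidableEq β] {k : ℕ} {s t : List β} :
    k ≤ commonPrefixLength s t ↔ s.take k = t.take k ∧ k ≤ s.length ∧ k ≤ t.length := by
  induction s generalizing k t with
  | nil => cases k <;> simp [commonPrefixLength]
  | cons a s ih =>
    cases k with
    | zero => simp
    | succ k =>
      cases t with
      | nil => simp [commonPrefixLength]
      | cons b t => by_cases hab : a = b <;> simp [commonPrefixLength, hab, ih]

end CommonPrefix

section GromovProduct

open FreeGroup (mk IsReduced isReduced_toWord invRev)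

variable {α : Type*}

lemma isReduced_invRev_append {a b : α × Bool} {s t : List (α × Bool)}
    (hs : IsReduced (a :: s)) (ht : IsReduced (b :: t)) (hab : a ≠ b) :
    IsReduced (invRev (a :: s) ++ b :: t) := by
  classical
  have hs' : IsReduced (invRev (a :: s)) := by
    rw [FreeGroup.isReduced_iff_reduce_eq, FreeGroup.reduce_invRev, hs.reduce_eq]
  refine List.isChain_append.2 ⟨hs', ht, ?_⟩
  rw [FreeGroup.invRev_cons]
  simp only [FreeGroup.invRev, List.map_cons, List.map_nil, List.reverse_singleton,
    List.getLast?_concat, List.head?_cons]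
  rintro x ⟨⟩ y ⟨⟩ hfst
  rw [Bool.not_eq]
  exact fun hsnd => hab (Prod.ext hfst hsnd)

variable [DecidableEq α]

lemma norm_mk_of_isReduced {s : List (α × Bool)} (hs : IsReduced s) : (mk s).norm = s.length := by
  rw [FreeGroup.norm, FreeGroup.toWord_mk, hs.reduce_eq]

lemma norm_inv_mk_mul_mk {s t : List (α × Bool)} (hs : IsReduced s) (ht : IsReduced t) :
    ((mk s)⁻¹ * mk t).norm + 2 * commonPrefixLength s t = s.length + t.length := by
  induction s generalizing t with
  | nil => simp [commonPrefixLength, ← FreeGroup.one_eq_mk, norm_mk_of_isReduced ht]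
  | cons a s ih =>
    cases t with
    | nil =>
      simp only [commonPrefixLength, ← FreeGroup.one_eq_mk, mul_one, FreeGroup.norm_inv_eq,
        norm_mk_of_isReduced hs, mul_zero, List.length_nil]
    | cons b t =>
      by_cases hab : a = b
      · subst hab
        have hcons (l : List (α × Bool)) : mk (a :: l) = mk [a] * mk l := by
          rw [FreeGroup.mul_mk, List.singleton_append]
        have hcancel : (mk (a :: s))⁻¹ * mk (a :: t) = (mk s)⁻¹ * mk t := by
          rw [hcons s, hcons t]
          group
        have := ih (hs.infix (List.suffix_cons a s).isInfix)
          (ht.infix (List.suffix_cons a t).isInfix)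
        simp only [hcancel, commonPrefixLength, if_true, List.length_cons]
        lia
      · rw [FreeGroup.inv_mk, FreeGroup.mul_mk,
          norm_mk_of_isReduced (isReduced_invRev_append hs ht hab)]
        simp [commonPrefixLength, hab]

/-- The Gromov product `(a | b)` based at `1` in the Cayley tree of the free group, encoded as the
length of the longest common prefix of the reduced words so that it is a natural number. -/
def gromovProduct (a b : FreeGroup α) : ℕ := commonPrefixLength a.toWord b.toWord

lemma norm_inv_mul_add_two_mul_gromovProduct (a b : FreeGroup α) :
    (a⁻¹ * b).norm + 2 * gromovProduct a b = a.norm + b.norm := by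
  have := norm_inv_mk_mul_mk (isReduced_toWord (x := a)) (isReduced_toWord (x := b))
  rwa [FreeGroup.mk_toWord, FreeGroup.mk_toWord] at this

lemma gromovProduct_comm (a b : FreeGroup α) : gromovProduct a b = gromovProduct b a := by
  have hab := norm_inv_mul_add_two_mul_gromovProduct a b
  have hba := norm_inv_mul_add_two_mul_gromovProduct b a
  rw [← FreeGroup.norm_inv_eq, mul_inv_rev, inv_inv] at hba
  lia

lemma gromovProduct_le_norm_left (a b : FreeGroup α) : gromovProduct a b ≤ a.norm :=
  (le_commonPrefixLength_iff.1 le_rfl).2.1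

lemma gromovProduct_le_norm_right (a b : FreeGroup α) : gromovProduct a b ≤ b.norm :=
  (le_commonPrefixLength_iff.1 le_rfl).2.2

lemma gromovProduct_self (a : FreeGroup α) : gromovProduct a a = a.norm :=
  le_antisymm (gromovProduct_le_norm_left a a) (le_commonPrefixLength_iff.2 ⟨rfl, le_rfl, le_rfl⟩)

/-- The Cayley tree is `0`-hyperbolic. -/
lemma le_gromovProduct_trans {k : ℕ} {a b c : FreeGroup α} (hab : k ≤ gromovProduct a b)
    (hbc : k ≤ gromovProduct b c) : k ≤ gromovProduct a c := by
  obtain ⟨htake, ha, -⟩ := le_commonPrefixLength_iff.1 hab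
  obtain ⟨htake', -, hc⟩ := le_commonPrefixLength_iff.1 hbc
  exact le_commonPrefixLength_iff.2 ⟨htake.trans htake', ha, hc⟩

lemma gromovProduct_mul_left_add (a b : FreeGroup α) :
    gromovProduct (a * b) a + gromovProduct a⁻¹ b = a.norm := by
  have h := norm_inv_mul_add_two_mul_gromovProduct a⁻¹ b
  have h' := norm_inv_mul_add_two_mul_gromovProduct a (a * b)
  rw [inv_inv, FreeGroup.norm_inv_eq] at h
  rw [inv_mul_cancel_left, gromovProduct_comm] at h'
  lia

/-- The element represented by the first `d` letters of the reduced word of `a`. -/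
def wordPrefix (d : ℕ) (a : FreeGroup α) : FreeGroup α := mk (a.toWord.take d)

lemma toWord_wordPrefix (d : ℕ) (a : FreeGroup α) :
    (wordPrefix d a).toWord = a.toWord.take d := by
  rw [wordPrefix, FreeGroup.toWord_mk]
  exact (isReduced_toWord.infix (List.take_prefix _ _).isInfix).reduce_eq

lemma norm_wordPrefix {d : ℕ} {a : FreeGroup α} (h : d ≤ a.norm) : (wordPrefix d a).norm = d := by
  rw [FreeGroup.norm, toWord_wordPrefix, List.length_take]
  exact min_eq_left h

lemma gromovProduct_wordPrefix_self {d : ℕ} {a : FreeGroup α} (h : d ≤ a.norm) :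
    gromovProduct (wordPrefix d a) a = d := by
  refine le_antisymm ((gromovProduct_le_norm_left _ _).trans (norm_wordPrefix h).le) ?_
  refine le_commonPrefixLength_iff.2 ⟨?_, (norm_wordPrefix h).ge, h⟩
  rw [toWord_wordPrefix, List.take_take, min_self]

lemma wordPrefix_eq_of_le_gromovProduct {d : ℕ} {a b : FreeGroup α} (h : d ≤ gromovProduct a b) :
    wordPrefix d a = wordPrefix d b := by
  rw [wordPrefix, wordPrefix, (le_commonPrefixLength_iff.1 h).1]

lemma norm_inv_wordPrefix_mul_self_add {d : ℕ} {a : FreeGroup α} (h : d ≤ a.norm) :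
    ((wordPrefix d a)⁻¹ * a).norm + d = a.norm := by
  have := norm_inv_mul_add_two_mul_gromovProduct (wordPrefix d a) a
  rw [gromovProduct_wordPrefix_self h, norm_wordPrefix h] at this
  lia

lemma norm_mul_wordPrefix_self_add {d : ℕ} {a : FreeGroup α} (h : d ≤ gromovProduct a a⁻¹) :
    (a * wordPrefix d a).norm + d = a.norm := by
  have hd : d ≤ a⁻¹.norm := h.trans (gromovProduct_le_norm_right _ _)
  rw [wordPrefix_eq_of_le_gromovProduct h, ← FreeGroup.norm_inv_eq, mul_inv_rev,
    norm_inv_wordPrefix_mul_self_add hd, FreeGroup.norm_inv_eq]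

lemma wordPrefix_mul_wordPrefix_self {d : ℕ} {a : FreeGroup α} (h : 2 * d ≤ a.norm) :
    wordPrefix d (a * wordPrefix d a) = wordPrefix d a := by
  refine wordPrefix_eq_of_le_gromovProduct ?_
  have hadd := gromovProduct_mul_left_add a (wordPrefix d a)
  have hle := gromovProduct_le_norm_right a⁻¹ (wordPrefix d a)
  rw [norm_wordPrefix (by lia)] at hle
  lia

end GromovProduct

section SmallCancellation

open FreeGroup (lift IsReduced isReduced_toWord)

/-- The image of the letter `(i, true)`, standing for `aᵢ`, or `(i, false)`, standing for `aᵢ⁻¹`,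
under the homomorphism determined by `φ`. -/
def letterImage {ι G : Type*} [Group G] (φ : ι → G) (x : ι × Bool) : G :=
  bif x.2 then φ x.1 else (φ x.1)⁻¹

lemma inv_letterImage {ι G : Type*} [Group G] (φ : ι → G) (x : ι × Bool) :
    (letterImage φ x)⁻¹ = letterImage φ (x.1, !x.2) := by
  obtain ⟨i, _ | _⟩ := x <;> simp [letterImage]

lemma lift_mk_cons {ι G : Type*} [Group G] (φ : ι → G) (x : ι × Bool) (L : List (ι × Bool)) :
    lift φ (FreeGroup.mk (x :: L)) = letterImage φ x * lift φ (FreeGroup.mk L) := by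
  simp only [FreeGroup.lift_mk, List.map_cons, List.prod_cons, letterImage]

lemma letterImage_update_injective {ι G : Type*} [DecidableEq ι] [Group G] (φ : ι → G)
    (x : ι × Bool) : Function.Injective fun g => letterImage (Function.update φ x.1 g) x := by
  obtain ⟨i, _ | _⟩ := x
  · simpa [letterImage] using inv_injective
  · simpa only [letterImage, Function.update_self] using! Function.injective_id

variable {ι α : Type*} [DecidableEq α]

lemma norm_letterImage (φ : ι → FreeGroup α) (x : ι × Bool) :
    (letterImage φ x).norm = (φ x.1).norm := by
  obtain ⟨i, _ | _⟩ := x <;> simp [letterImage]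

/-- A small cancellation condition on a tuple `φ`: its entries have length at least `3 * d`, and
the initial overlap of any two distinct elements among the entries and their inverses is shorter
than `d`. -/
structure SmallCancellation (d : ℕ) (φ : ι → FreeGroup α) : Prop where
  le_norm (i : ι) : 3 * d ≤ (φ i).norm
  gromovProduct_lt {x y : ι × Bool} (hxy : x ≠ y) :
    gromovProduct (letterImage φ x) (letterImage φ y) < d

namespace SmallCancellation

variable {d : ℕ} {φ : ι → FreeGroup α}

lemma le_norm_letterImage (hφ : SmallCancellation d φ) (x : ι × Bool) :
    3 * d ≤ (letterImage φ x).norm :=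
  (hφ.le_norm x.1).trans_eq (norm_letterImage φ x).symm

lemma gromovProduct_inv_letterImage_lt (hφ : SmallCancellation d φ) {x y : ι × Bool}
    (hxy : x.1 = y.1 → x.2 = y.2) {g : FreeGroup α}
    (hg : (letterImage φ y).norm ≤ gromovProduct g (letterImage φ y) + d) :
    gromovProduct (letterImage φ x)⁻¹ g < d := by
  have hne : (x.1, !x.2) ≠ y := by
    rintro rfl
    simp at hxy
  have hlt := hφ.gromovProduct_lt hne
  have hy := hφ.le_norm_letterImage y
  rw [← inv_letterImage] at hlt
  by_contra! hle
  exact hlt.not_ge (le_gromovProduct_trans hle (by lia))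

lemma norm_letterImage_le_gromovProduct_add (hφ : SmallCancellation d φ) {x : ι × Bool}
    {L : List (ι × Bool)} (hL : IsReduced (x :: L)) :
    (letterImage φ x).norm ≤
      gromovProduct (lift φ (FreeGroup.mk (x :: L))) (letterImage φ x) + d := by
  induction L generalizing x with
  | nil =>
    simp only [lift_mk_cons, ← FreeGroup.one_eq_mk, map_one, mul_one, gromovProduct_self]
    exact Nat.le_add_right _ _
  | cons y L ih =>
    obtain ⟨hxy, hyL⟩ := FreeGroup.isReduced_cons_cons.1 hL
    have hlt := hφ.gromovProduct_inv_letterImage_lt hxy (ih hyL)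
    have hadd := gromovProduct_mul_left_add (letterImage φ x) (lift φ (FreeGroup.mk (y :: L)))
    rw [lift_mk_cons]
    lia

lemma mul_length_le_norm_lift_mk (hφ : SmallCancellation d φ) {L : List (ι × Bool)}
    (hL : IsReduced L) : d * L.length ≤ (lift φ (FreeGroup.mk L)).norm := by
  induction L with
  | nil => simp
  | cons x L ih =>
    have hx := hφ.le_norm_letterImage x
    rw [lift_mk_cons]
    cases L with
    | nil =>
      simp only [← FreeGroup.one_eq_mk, map_one, mul_one, List.length_singleton]
      lia
    | cons y L =>
      obtain ⟨hxy, hyL⟩ := FreeGroup.isReduced_cons_cons.1 hL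
      have hlt := hφ.gromovProduct_inv_letterImage_lt hxy
        (hφ.norm_letterImage_le_gromovProduct_add hyL)
      have hnorm := norm_inv_mul_add_two_mul_gromovProduct (letterImage φ x)⁻¹
        (lift φ (FreeGroup.mk (y :: L)))
      rw [inv_inv, FreeGroup.norm_inv_eq] at hnorm
      rw [List.length_cons, mul_add_one]
      have := ih hyL
      lia

theorem mul_norm_le_norm_lift [DecidableEq ι] (hφ : SmallCancellation d φ) (w : FreeGroup ι) :
    d * w.norm ≤ (lift φ w).norm := by
  have := hφ.mul_length_le_norm_lift_mk (isReduced_toWord (x := w))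
  rwa [FreeGroup.mk_toWord] at this

end SmallCancellation

/-- The pair of letters `x, y` witnesses the failure of `SmallCancellation d φ`: the image of `x` is
too short, or `x` and `y` are distinct and their images overlap too much. The overlap is considered
only for images of length at least `2 * d`, which makes the event easy to count when `y` is the
inverse of `x`. -/
def IsObstruction (d : ℕ) (φ : ι → FreeGroup α) (x y : ι × Bool) : Prop :=
  (φ x.1).norm < 3 * d ∨
    x ≠ y ∧ 2 * d ≤ (φ x.1).norm ∧ d ≤ gromovProduct (letterImage φ x) (letterImage φ y)

lemma exists_isObstruction_of_not_smallCancellation {d : ℕ} {φ : ι → FreeGroup α}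
    (hφ : ¬ SmallCancellation d φ) : ∃ x y, IsObstruction d φ x y := by
  contrapose! hφ
  have hnorm (i : ι) : 3 * d ≤ (φ i).norm :=
    not_lt.1 fun h => hφ (i, true) (i, true) (Or.inl h)
  refine ⟨hnorm, fun {x y} hxy => not_le.1 fun h => hφ x y (Or.inr ⟨hxy, ?_, h⟩)⟩
  have := hnorm x.1
  lia

end SmallCancellation

section WordBall

open Finset
open FreeGroup (mk IsReduced isReduced_toWord)

variable (α : Type*) [DecidableEq α] [Finite α]

/-- The ball `H_p` in the free group `H` on a finite set `α`: the elements of word length at most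
`p`. -/
noncomputable def wordBall (p : ℕ) : Finset (FreeGroup α) :=
  ((List.finite_length_le (α × Bool) p).preimage FreeGroup.toWord_injective.injOn).toFinset

variable {α}

@[simp]
lemma mem_wordBall {p : ℕ} {a : FreeGroup α} : a ∈ wordBall α p ↔ a.norm ≤ p := by
  simp [wordBall, FreeGroup.norm]

lemma card_wordBall_pos (p : ℕ) : 0 < #(wordBall α p) :=
  card_pos.2 ⟨1, by simp⟩

lemma natCard_norm_le (p : ℕ) : Nat.card {a : FreeGroup α // a.norm ≤ p} = #(wordBall α p) :=
  Nat.subtype_card _ fun _ => mem_wordBall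

/-- The exponent sign of the first letter of `L`, or `true` if `L` is empty. Repeating it makes
`(j, headSign L) :: L` reduced whenever `L` is, for every generator `j`. -/
def headSign {β : Type*} (L : List (β × Bool)) : Bool := L.head?.elim true Prod.snd

lemma isReduced_headSign_cons {β : Type*} {L : List (β × Bool)} (hL : IsReduced L) (j : β) :
    IsReduced ((j, headSign L) :: L) := by
  cases L with
  | nil => exact IsReduced.singleton
  | cons x L => exact FreeGroup.isReduced_cons_cons.2 ⟨fun _ => rfl, hL⟩

lemma natCard_mul_card_wordBall_le (p : ℕ) :
    Nat.card α * #(wordBall α p) ≤ #(wordBall α (p + 1)) := by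
  cases nonempty_fintype α
  rw [Nat.card_eq_fintype_card, ← card_univ, ← card_product]
  have hreduced (z : α × FreeGroup α) : IsReduced ((z.1, headSign z.2.toWord) :: z.2.toWord) :=
    isReduced_headSign_cons isReduced_toWord z.1
  refine card_le_card_of_injOn (fun z => mk ((z.1, headSign z.2.toWord) :: z.2.toWord)) ?_ ?_
  · intro z hz
    simpa [norm_mk_of_isReduced (hreduced z), ← FreeGroup.norm.eq_def] using hz
  · intro z _ z' _ h
    have hword := congrArg FreeGroup.toWord h
    rw [FreeGroup.toWord_mk, FreeGroup.toWord_mk, (hreduced z).reduce_eq,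
      (hreduced z').reduce_eq] at hword
    obtain ⟨hhead, htail⟩ := List.cons.inj hword
    exact Prod.ext (Prod.ext_iff.1 hhead).1 (FreeGroup.toWord_injective htail)

lemma two_pow_mul_card_wordBall_le [Nontrivial α] (p d : ℕ) :
    2 ^ d * #(wordBall α p) ≤ #(wordBall α (p + d)) := by
  induction d with
  | zero => simp
  | succ d ih =>
    calc 2 ^ (d + 1) * #(wordBall α p) = 2 * (2 ^ d * #(wordBall α p)) := by ring
      _ ≤ Nat.card α * #(wordBall α (p + d)) := Nat.mul_le_mul Finite.one_lt_card ih
      _ ≤ #(wordBall α (p + (d + 1))) := natCard_mul_card_wordBall_le (p + d)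

lemma card_filter_le_gromovProduct_le (p d : ℕ) (b : FreeGroup α) :
    #{a ∈ wordBall α p | d ≤ gromovProduct a b} ≤ #(wordBall α (p - d)) := by
  refine card_le_card_of_injOn (fun a => (wordPrefix d b)⁻¹ * a) ?_
    (mul_right_injective _).injOn
  intro a ha
  obtain ⟨hp, hd⟩ := mem_filter.1 ha
  have hnorm := norm_inv_wordPrefix_mul_self_add (hd.trans (gromovProduct_le_norm_left a b))
  rw [wordPrefix_eq_of_le_gromovProduct hd] at hnorm
  rw [mem_wordBall] at hp
  rw [mem_coe, mem_wordBall]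
  lia

lemma card_filter_le_gromovProduct_inv_le (p d : ℕ) :
    #{a ∈ wordBall α p | 2 * d ≤ a.norm ∧ d ≤ gromovProduct a a⁻¹} ≤ #(wordBall α (p - d)) := by
  refine card_le_card_of_injOn (fun a => a * wordPrefix d a) ?_ ?_
  · intro a ha
    obtain ⟨hp, -, hd⟩ := mem_filter.1 ha
    have hnorm := norm_mul_wordPrefix_self_add hd
    rw [mem_wordBall] at hp
    rw [mem_coe, mem_wordBall]
    lia
  · intro a ha b hb hab
    have hprefix : wordPrefix d a = wordPrefix d b := by
      rw [← wordPrefix_mul_wordPrefix_self (mem_filter.1 ha).2.1,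
        ← wordPrefix_mul_wordPrefix_self (mem_filter.1 hb).2.1]
      exact congrArg (wordPrefix d) hab
    simp only [hprefix] at hab
    exact mul_right_cancel hab

end WordBall

section Counting

open Finset
open FreeGroup (lift)

lemma card_filter_piFinset_mul_card_le {ι : Type*} [Fintype ι] [DecidableEq ι] {β : ι → Type*}
    (s : ∀ i, Finset (β i)) (P : (∀ i, β i) → Prop) [DecidablePred P] (i : ι) {K : ℕ}
    (hK : ∀ ψ, #{b ∈ s i | P (Function.update ψ i b)} ≤ K) :
    #{φ ∈ Fintype.piFinset s | P φ} * #(s i) ≤ K * #(Fintype.piFinset s) := by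
  -- Exchanging the coordinate `φ i` with `b` is an involution on the pairs `(φ, b)`.
  calc #{φ ∈ Fintype.piFinset s | P φ} * #(s i)
      = #({φ ∈ Fintype.piFinset s | P φ} ×ˢ s i) := (card_product _ _).symm
    _ ≤ #{x ∈ Fintype.piFinset s ×ˢ s i | P (Function.update x.1 i x.2)} := by
        refine card_le_card_of_injOn (fun x => (Function.update x.1 i x.2, x.1 i)) ?_ ?_
        · intro x hx
          simp only [coe_product, coe_filter, Set.mem_prod, Set.mem_ofPred_eq, mem_coe,
            Fintype.mem_piFinset, mem_product, Function.update_idem,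
            Function.update_eq_self] at hx ⊢
          refine ⟨⟨fun j => ?_, hx.1.1 i⟩, hx.1.2⟩
          rcases eq_or_ne j i with rfl | hj
          · simpa using hx.2
          · simpa [hj] using hx.1.1 j
        · refine Function.Injective.injOn (Function.LeftInverse.injective
            (g := fun x => (Function.update x.1 i x.2, x.1 i)) fun x => ?_)
          simp
    _ = ∑ φ ∈ Fintype.piFinset s, #{b ∈ s i | P (Function.update φ i b)} := by
        simp_rw [card_filter]
        exact sum_product _ _ _
    _ ≤ K * #(Fintype.piFinset s) := by
        rw [mul_comm]
        exact sum_le_card_nsmul _ _ _ fun φ _ => hK φ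

lemma tendsto_card_filter_not_div_card {γ β : Type*} {l : Filter γ} (s : γ → Finset β)
    (P : β → Prop) [DecidablePred P] (hs : ∀ p, (s p).Nonempty)
    (hP : Filter.Tendsto (fun p => (#{x ∈ s p | P x} : ℝ) / #(s p)) l (nhds 0)) :
    Filter.Tendsto (fun p => (#{x ∈ s p | ¬ P x} : ℝ) / #(s p)) l (nhds 1) := by
  have hsub : Filter.Tendsto (fun p => 1 - (#{x ∈ s p | P x} : ℝ) / #(s p)) l (nhds 1) := by
    simpa using hP.const_sub 1
  refine hsub.congr fun p => ?_
  have hcard : (#{x ∈ s p | P x} : ℝ) + #{x ∈ s p | ¬ P x} = #(s p) :=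
    mod_cast card_filter_add_card_filter_not P
  have hpos : (#(s p) : ℝ) ≠ 0 := by exact_mod_cast (hs p).card_ne_zero
  rw [eq_div_iff hpos, sub_mul, one_mul, div_mul_cancel₀ _ hpos]
  linarith

variable {ι α : Type*} [DecidableEq α] [Finite α]

open scoped Classical in
lemma card_filter_mul_inv_mem_range_le [DecidableEq ι] [Finite ι] {p d r : ℕ}
    {φ : ι → FreeGroup α} (hφ : SmallCancellation d φ) (hr : 2 * p < d * (r + 1)) :
    #{y ∈ wordBall α p ×ˢ wordBall α p | y.1 * y.2⁻¹ ∈ (lift φ).range} ≤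
      #(wordBall ι r) * #(wordBall α p) := by
  rw [← card_product]
  refine card_le_card_of_surjOn (fun z => (lift φ z.1 * z.2, z.2)) ?_
  rintro ⟨u, v⟩ huv
  simp only [coe_filter, Set.mem_ofPred_eq, mem_product, mem_wordBall] at huv
  obtain ⟨⟨hu, hv⟩, w, hw⟩ := huv
  refine ⟨(w, v), ?_, by simp [hw]⟩
  have hlower := hφ.mul_norm_le_norm_lift w
  have hupper : (lift φ w).norm ≤ u.norm + v.norm := by
    simpa only [hw, FreeGroup.norm_inv_eq] using FreeGroup.norm_mul_le u v⁻¹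
  have hw_norm : w.norm < r + 1 := Nat.lt_of_mul_lt_mul_left (a := d) (by lia)
  simp only [coe_product, Set.mem_prod, mem_coe, mem_wordBall]
  exact ⟨by lia, hv⟩

section

variable [DecidableEq ι]

lemma card_filter_gromovProduct_letterImage_update_le (p d : ℕ) {x y : ι × Bool} (hxy : x ≠ y)
    (ψ : ι → FreeGroup α) :
    #{a ∈ wordBall α p | 2 * d ≤ a.norm ∧ d ≤ gromovProduct
      (letterImage (Function.update ψ x.1 a) x) (letterImage (Function.update ψ x.1 a) y)} ≤
    #(wordBall α (p - d)) := by
  have hnorm (a : FreeGroup α) : (letterImage (Function.update ψ x.1 a) x).norm = a.norm := by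
    rw [norm_letterImage, Function.update_self]
  have hinj := letterImage_update_injective ψ x
  by_cases hfst : y.1 = x.1
  · obtain rfl : y = (x.1, !x.2) :=
      Prod.ext hfst (Bool.eq_not.2 fun hsnd => hxy (Prod.ext hfst hsnd).symm)
    refine (card_le_card_of_injOn _ (fun a ha => ?_) hinj.injOn).trans
      (card_filter_le_gromovProduct_inv_le p d)
    simpa [hnorm, ← inv_letterImage] using ha
  · have hy (a : FreeGroup α) : letterImage (Function.update ψ x.1 a) y = letterImage ψ y := by
      simp only [letterImage, Function.update_of_ne hfst]
    refine (card_le_card_of_injOn _ (fun a ha => ?_) hinj.injOn).trans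
      (card_filter_le_gromovProduct_le p d (letterImage ψ y))
    simp only [hy, coe_filter, mem_wordBall, Set.mem_ofPred_eq, hnorm] at ha ⊢
    exact ⟨ha.1, ha.2.2⟩

lemma card_filter_norm_lt_le {p k d : ℕ} (hk : k + d ≤ p) :
    #{a ∈ wordBall α p | a.norm < k} ≤ #(wordBall α (p - d)) := by
  refine card_le_card fun a ha => ?_
  have := (mem_filter.1 ha).2
  rw [mem_wordBall]
  lia

variable [Fintype ι]

lemma card_piFinset_wordBall (p : ℕ) :
    #(Fintype.piFinset fun _ : ι => wordBall α p) = #(wordBall α p) ^ Fintype.card ι := by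
  rw [Fintype.card_piFinset, prod_const, card_univ]

open scoped Classical in
lemma card_filter_isObstruction_mul_card_le {p d : ℕ} (hd : 4 * d ≤ p) (x y : ι × Bool) :
    #{φ ∈ Fintype.piFinset fun _ : ι => wordBall α p | IsObstruction d φ x y} *
        #(wordBall α p) ≤
      2 * #(wordBall α (p - d)) * #(wordBall α p) ^ Fintype.card ι := by
  rw [← card_piFinset_wordBall]
  refine card_filter_piFinset_mul_card_le (fun _ => wordBall α p)
    (fun φ => IsObstruction d φ x y) x.1 fun ψ => ?_
  simp only [IsObstruction, Function.update_self, filter_or]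
  rw [two_mul #(wordBall α (p - d))]
  refine (card_union_le _ _).trans (add_le_add (card_filter_norm_lt_le (by lia)) ?_)
  by_cases hxy : x = y
  · simp [hxy]
  · simpa only [ne_eq, hxy, not_false_eq_true, true_and] using!
      card_filter_gromovProduct_letterImage_update_le p d hxy ψ

open scoped Classical in
lemma card_filter_not_smallCancellation_mul_card_le {p d : ℕ} (hd : 4 * d ≤ p) :
    #{φ ∈ Fintype.piFinset fun _ : ι => wordBall α p | ¬ SmallCancellation d φ} *
        #(wordBall α p) ≤
      8 * Fintype.card ι ^ 2 * #(wordBall α (p - d)) * #(wordBall α p) ^ Fintype.card ι := by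
  set Φ := Fintype.piFinset fun _ : ι => wordBall α p
  have hcover : {φ ∈ Φ | ¬ SmallCancellation d φ} ⊆
      univ.biUnion fun z : (ι × Bool) × ι × Bool => {φ ∈ Φ | IsObstruction d φ z.1 z.2} := by
    intro φ hφ
    obtain ⟨hΦ, hφ⟩ := mem_filter.1 hφ
    obtain ⟨x, y, hxy⟩ := exists_isObstruction_of_not_smallCancellation hφ
    exact mem_biUnion.2 ⟨(x, y), mem_univ _, mem_filter.2 ⟨hΦ, hxy⟩⟩
  calc #{φ ∈ Φ | ¬ SmallCancellation d φ} * #(wordBall α p)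
      ≤ (∑ z : (ι × Bool) × ι × Bool, #{φ ∈ Φ | IsObstruction d φ z.1 z.2}) *
          #(wordBall α p) :=
        Nat.mul_le_mul_right _ ((card_le_card hcover).trans card_biUnion_le)
    _ ≤ Fintype.card ((ι × Bool) × ι × Bool) *
          (2 * #(wordBall α (p - d)) * #(wordBall α p) ^ Fintype.card ι) := by
        rw [sum_mul]
        exact sum_le_card_nsmul _ _ _ fun z _ => card_filter_isObstruction_mul_card_le hd z.1 z.2
    _ = 8 * Fintype.card ι ^ 2 * #(wordBall α (p - d)) * #(wordBall α p) ^ Fintype.card ι := by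
        simp only [Fintype.card_prod, Fintype.card_bool]
        ring

end

variable [Fintype ι]

variable (ι α) in
/-- The set `(H_p)^(ι + 2)` of triples `(φ, u, v)` all of whose entries have word length at most
`p`. -/
noncomputable def tripleBall (p : ℕ) : Finset ((ι → FreeGroup α) × FreeGroup α × FreeGroup α) :=
  letI := Classical.decEq ι
  (Fintype.piFinset fun _ => wordBall α p) ×ˢ wordBall α p ×ˢ wordBall α p

lemma mem_tripleBall {p : ℕ} {x : (ι → FreeGroup α) × FreeGroup α × FreeGroup α} :
    x ∈ tripleBall ι α p ↔ (∀ i, (x.1 i).norm ≤ p) ∧ x.2.1.norm ≤ p ∧ x.2.2.norm ≤ p := by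
  simp [tripleBall]

lemma card_tripleBall (p : ℕ) :
    #(tripleBall ι α p) = #(wordBall α p) ^ (Fintype.card ι + 2) := by
  classical
  rw [tripleBall, card_product, card_product, card_piFinset_wordBall]
  ring

variable (ι α) in
lemma tripleBall_nonempty (p : ℕ) : (tripleBall ι α p).Nonempty :=
  ⟨1, mem_tripleBall.2 (by simp)⟩

open scoped Classical in
lemma card_filter_tripleBall_mem_range_le {p d r : ℕ} (hd : 4 * d ≤ p)
    (hr : 2 * p < d * (r + 1)) :
    #{x ∈ tripleBall ι α p | x.2.1 * x.2.2⁻¹ ∈ (lift x.1).range} ≤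
      (8 * Fintype.card ι ^ 2 + #(wordBall ι r)) * #(wordBall α (p - d)) *
        #(wordBall α p) ^ (Fintype.card ι + 1) := by
  set B := wordBall α p
  set Φ := Fintype.piFinset fun _ : ι => B
  let f (φ : ι → FreeGroup α) : ℕ := #{y ∈ B ×ˢ B | y.1 * y.2⁻¹ ∈ (lift φ).range}
  have hbad : ∑ φ ∈ Φ with ¬ SmallCancellation d φ, f φ ≤
      8 * Fintype.card ι ^ 2 * #(wordBall α (p - d)) * #B ^ (Fintype.card ι + 1) :=
    calc ∑ φ ∈ Φ with ¬ SmallCancellation d φ, f φ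
        ≤ #{φ ∈ Φ | ¬ SmallCancellation d φ} * (#B * #B) := by
          rw [← card_product]
          exact sum_le_card_nsmul _ _ _ fun φ _ => card_filter_le _ _
      _ = #{φ ∈ Φ | ¬ SmallCancellation d φ} * #B * #B := (mul_assoc _ _ _).symm
      _ ≤ 8 * Fintype.card ι ^ 2 * #(wordBall α (p - d)) * #B ^ Fintype.card ι * #B :=
          Nat.mul_le_mul_right _ (card_filter_not_smallCancellation_mul_card_le hd)
      _ = _ := by ring
  have hgood : ∑ φ ∈ Φ with SmallCancellation d φ, f φ ≤
      #(wordBall ι r) * #(wordBall α (p - d)) * #B ^ (Fintype.card ι + 1) :=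
    calc ∑ φ ∈ Φ with SmallCancellation d φ, f φ
        ≤ #{φ ∈ Φ | SmallCancellation d φ} * (#(wordBall ι r) * #B) :=
          sum_le_card_nsmul _ _ _ fun φ hφ =>
            card_filter_mul_inv_mem_range_le (mem_filter.1 hφ).2 hr
      _ ≤ #B ^ Fintype.card ι * (#(wordBall ι r) * #B) := by
          rw [← card_piFinset_wordBall]
          exact Nat.mul_le_mul_right _ (card_filter_le _ _)
      _ = #(wordBall ι r) * 1 * #B ^ (Fintype.card ι + 1) := by ring
      _ ≤ _ := by gcongr; exact card_wordBall_pos _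
  calc _ = ∑ φ ∈ Φ, f φ := by
        simp_rw [f, card_filter]
        exact sum_product _ _ _
    _ = ∑ φ ∈ Φ with SmallCancellation d φ, f φ + ∑ φ ∈ Φ with ¬ SmallCancellation d φ, f φ :=
        (sum_filter_add_sum_filter_not _ _ _).symm
    _ ≤ _ := by
        rw [add_mul, add_mul, add_comm]
        exact add_le_add hbad hgood

end Counting

section Density

open Finset Filter
open scoped Topology
open FreeGroup (lift)

variable {α : Type*} [DecidableEq α]

lemma tendsto_card_wordBall_sub_div [Finite α] [Nontrivial α] {d : ℕ → ℕ}
    (hd : Tendsto d atTop atTop) (hle : ∀ p, d p ≤ p) :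
    Tendsto (fun p => (#(wordBall α (p - d p)) : ℝ) / #(wordBall α p)) atTop (𝓝 0) := by
  refine squeeze_zero (fun p => by positivity) (fun p => ?_)
    ((tendsto_pow_atTop_nhds_zero_of_lt_one (r := (1 / 2 : ℝ)) (by norm_num) (by norm_num)).comp hd)
  have hgrowth := two_pow_mul_card_wordBall_le (α := α) (p - d p) (d p)
  rw [Nat.sub_add_cancel (hle p)] at hgrowth
  have hpos : (0 : ℝ) < #(wordBall α p) := mod_cast card_wordBall_pos p
  have hgrowth' : (2 : ℝ) ^ d p * #(wordBall α (p - d p)) ≤ #(wordBall α p) := mod_cast hgrowth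
  rw [Function.comp_apply, div_le_iff₀ hpos, one_div, inv_pow, ← div_eq_inv_mul,
    le_div_iff₀' (by positivity)]
  exact hgrowth'

open scoped Classical in
lemma tendsto_card_filter_mem_range_div (ι : Type*) [Fintype ι] [Finite α] [Nontrivial α] :
    Tendsto (fun p => (#{x ∈ tripleBall ι α p | x.2.1 * x.2.2⁻¹ ∈ (lift x.1).range} : ℝ) /
      #(tripleBall ι α p)) atTop (𝓝 0) := by
  set C : ℕ := 8 * Fintype.card ι ^ 2 + #(wordBall ι 15)
  have hdecay := (tendsto_card_wordBall_sub_div (α := α) (d := fun p => p / 4)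
    (Nat.tendsto_div_const_atTop (by norm_num)) fun p => Nat.div_le_self p 4).const_mul (C : ℝ)
  rw [mul_zero] at hdecay
  refine squeeze_zero' (Eventually.of_forall fun p => by positivity) ?_ hdecay
  filter_upwards [eventually_ge_atTop 4] with p hp
  have hcount := card_filter_tripleBall_mem_range_le (ι := ι) (α := α) (p := p) (d := p / 4)
    (r := 15) (by lia) (by lia)
  have hpos : (0 : ℝ) < #(wordBall α p) := mod_cast card_wordBall_pos p
  rw [card_tripleBall, Nat.cast_pow, div_le_iff₀ (by positivity)]
  calc (#{x ∈ tripleBall ι α p | x.2.1 * x.2.2⁻¹ ∈ (lift x.1).range} : ℝ)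
      ≤ C * #(wordBall α (p - p / 4)) * #(wordBall α p) ^ (Fintype.card ι + 1) :=
        mod_cast hcount
    _ = C * (#(wordBall α (p - p / 4)) / #(wordBall α p)) *
          #(wordBall α p) ^ (Fintype.card ι + 2) := by
        rw [pow_succ _ (Fintype.card ι + 1)]
        field_simp

theorem generic_not_in_image_general (ι : Type*) [Fintype ι] [Finite α] [Nontrivial α] :
    Tendsto (fun p : ℕ =>
      (Nat.card {x : (ι → FreeGroup α) × FreeGroup α × FreeGroup α //
          x.2.1 * x.2.2⁻¹ ∉ (lift x.1).range ∧
          (∀ i, (x.1 i).norm ≤ p) ∧ x.2.1.norm ≤ p ∧ x.2.2.norm ≤ p} : ℝ) /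
        (Nat.card {w : FreeGroup α // w.norm ≤ p} : ℝ) ^ (Fintype.card ι + 2))
      atTop (𝓝 1) := by
  classical
  refine (tendsto_card_filter_not_div_card (tripleBall ι α) _ (tripleBall_nonempty ι α)
    (tendsto_card_filter_mem_range_div ι)).congr fun p => ?_
  rw [card_tripleBall, natCard_norm_le, Nat.cast_pow]
  congr 2
  refine (Nat.subtype_card _ fun x => ?_).symm
  rw [mem_filter, mem_tripleBall, and_comm]

end Density

/-- Let `G` be the free group on `m` generators and `H` the free group
of rank `n > 1`. The set of triples `(φ, u, v) ∈ H^m × H × H` such that `u * v⁻¹` does not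
lie in the image subgroup `φ(G)` is generic: its asymptotic density in `H^{m+2}` is `1`. -/
theorem generic_not_in_image {m n : ℕ} (hn : 1 < n) :
    Filter.Tendsto (fun p : ℕ =>
      (Nat.card {x : (Fin m → FreeGroup (Fin n)) × FreeGroup (Fin n) × FreeGroup (Fin n) //
          x.2.1 * x.2.2⁻¹ ∉ (FreeGroup.lift x.1).range ∧
          (∀ i, FreeGroup.norm (x.1 i) ≤ p) ∧
          FreeGroup.norm x.2.1 ≤ p ∧ FreeGroup.norm x.2.2 ≤ p} : ℝ) /
        (ballCount n p : ℝ) ^ (m + 2))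
      Filter.atTop (nhds 1) := by
  have : Nontrivial (Fin n) := Fin.nontrivial_iff_two_le.2 hn
  simpa only [ballCount, Fintype.card_fin] using generic_not_in_image_general (α := Fin n) (Fin m)
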